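/- If a ≠ 0, ε ≠ 0, and b is a real number that is NOT an integer multiple of π/N, then the Harper matrix h(a, b, ε) has N distinct eigenvalues; equivalently, its characteristic polynomial has N distinct roots (all eigenvalues are simple). -/

import Mathlib

open Matrix Complex

/-- The primitive `N`-th root of unity `ω = exp(2πi/N)`. -/
noncomputable def omegaN (N : ℕ) : ℂ := Complex.exp (2 * (Real.pi : ℂ) * Complex.I / (N : ℂ))

/-- The clock matrix `Z` with `Z_{jk} = ω^j` if `j = k`, `0` otherwise. -/
noncomputable def clockZ (N : ℕ) : Matrix (Fin N) (Fin N) ℂ :=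
  Matrix.diagonal fun j => omegaN N ^ (j : ℕ)

/-- The shift matrix `X` with `X_{jk} = 1` if `j = k + 1 (mod N)`, `0` otherwise. -/
def shiftX (N : ℕ) : Matrix (Fin N) (Fin N) ℂ :=
  Matrix.of fun j k => if (j : ℕ) = ((k : ℕ) + 1) % N then 1 else 0

/-- The shifted Harper matrix
`h(a,b,ε) = (a/2)·e^{ib}·X + (a/2)·e^{−ib}·Xᴴ + (ε/2)·(Z + Zᴴ)`. -/
noncomputable def harper (N : ℕ) (a b ε : ℝ) : Matrix (Fin N) (Fin N) ℂ :=
  ((a : ℂ) / 2 * Complex.exp ((b : ℂ) * Complex.I)) • shiftX N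
  + ((a : ℂ) / 2 * Complex.exp (-(b : ℂ) * Complex.I)) • (shiftX N)ᴴ
  + ((ε : ℂ) / 2) • (clockZ N + (clockZ N)ᴴ)

/-- The parity matrix `P` with `P_{jk} = 1` if `j + k ≡ 0 (mod N)`, `0` otherwise. -/
def parityP (N : ℕ) : Matrix (Fin N) (Fin N) ℂ :=
  Matrix.of fun j k => if ((j : ℕ) + (k : ℕ)) % N = 0 then 1 else 0

/-- The discrete Fourier transform matrix `Q` with `Q_{jk} = ω^{jk}/√N`. -/
noncomputable def dftQ (N : ℕ) : Matrix (Fin N) (Fin N) ℂ :=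
  Matrix.of fun j k => omegaN N ^ ((j : ℕ) * (k : ℕ)) / (Real.sqrt N : ℂ)

/-!
An eigenvector of a periodic Jacobi matrix solves a three-term recurrence on the cycle `ℤ/N`. The
Casoratian of two solutions is multiplied by a ratio of hopping amplitudes at each step; once around
the cycle, with amplitudes `t i`, it is multiplied by the ratio of `∏ i, t i` to its conjugate,
which is not `1` when `∏ i, t i` is not real. So the Casoratian vanishes and every eigenspace is a
line, which for a Hermitian matrix makes the spectrum simple. For the Harper matrix the product is
`(a/2)^N * exp (i N b)`, of imaginary part `(a/2)^N * sin (N b)`.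
-/

open Module ComplexConjugate

section HermitianMatrix

variable {𝕜 n : Type*} [RCLike 𝕜] [Fintype n] [DecidableEq n] {A : Matrix n n 𝕜}

theorem card_eigenvalues_eq_le_finrank_eigenspace (hA : A.IsHermitian) (μ : ℝ) :
    Fintype.card {i // hA.eigenvalues i = μ} ≤ finrank 𝕜 (End.eigenspace A.toLin' (μ : 𝕜)) := by
  have mem_eigenspace (i : {i // hA.eigenvalues i = μ}) :
      (hA.eigenvectorBasis i).ofLp ∈ End.eigenspace A.toLin' (μ : 𝕜) := by
    rw [End.mem_eigenspace_iff, toLin'_apply, hA.mulVec_eigenvectorBasis, i.2,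
      RCLike.real_smul_eq_coe_smul (K := 𝕜)]
  have hli : LinearIndependent 𝕜 fun i ↦
      (⟨_, mem_eigenspace i⟩ : End.eigenspace A.toLin' (μ : 𝕜)) := by
    refine .of_comp (Submodule.subtype _) ?_
    have hbasis :=
      (hA.eigenvectorBasis.toBasis.map (WithLp.linearEquiv 2 𝕜 (n → 𝕜))).linearIndependent
    simpa [Function.comp_def] using hbasis.comp _ Subtype.val_injective
  exact hli.fintype_card_le_finrank

theorem eigenvalues_injective_of_finrank_eigenspace_le_one (hA : A.IsHermitian)
    (h : ∀ μ : 𝕜, finrank 𝕜 (End.eigenspace A.toLin' μ) ≤ 1) :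
    Function.Injective hA.eigenvalues := by
  intro i j hij
  have hcard := (card_eigenvalues_eq_le_finrank_eigenspace hA (hA.eigenvalues j)).trans (h _)
  exact congrArg Subtype.val <| Fintype.card_le_one_iff.mp hcard ⟨i, hij⟩ ⟨j, rfl⟩

theorem card_toFinset_roots_charpoly_of_finrank_eigenspace_le_one (hA : A.IsHermitian)
    (h : ∀ μ : 𝕜, finrank 𝕜 (End.eigenspace A.toLin' μ) ≤ 1) :
    A.charpoly.roots.toFinset.card = Fintype.card n := by
  have hinj := RCLike.ofReal_injective (K := 𝕜) |>.comp
    (eigenvalues_injective_of_finrank_eigenspace_le_one hA h)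
  rw [hA.roots_charpoly_eq_eigenvalues,
    Multiset.toFinset_card_of_nodup (Finset.univ.nodup.map hinj), Multiset.card_map,
    Finset.card_val, Finset.card_univ]

end HermitianMatrix

theorem exists_eq_zero_of_prod_ne_prod {ι R : Type*} [Fintype ι] [CommMonoidWithZero R]
    [IsCancelMulZero R] [Nontrivial R] (σ : Equiv.Perm ι) {c c' w : ι → R}
    (hw : ∀ i, c' (σ i) * w (σ i) = c i * w i) (hc : ∏ i, c i ≠ ∏ i, c' i) : ∃ i, w i = 0 := by
  by_contra! hw0
  have hprod : ∏ i, w i ≠ 0 := Finset.prod_ne_zero_iff.mpr fun i _ ↦ hw0 i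
  refine hc (mul_right_cancel₀ hprod ?_)
  calc (∏ i, c i) * ∏ i, w i = ∏ i, c' (σ i) * w (σ i) := by
        simp only [hw, Finset.prod_mul_distrib]
    _ = (∏ i, c' i) * ∏ i, w i := by
        rw [Equiv.prod_comp σ fun i ↦ c' i * w i, Finset.prod_mul_distrib]

theorem forall_of_forall_imp_add_one {N : ℕ} [NeZero N] {p : Fin N → Prop} {i : Fin N}
    (hi : p i) (h : ∀ j, p j → p (j + 1)) (j : Fin N) : p j := by
  have hp (n : ℕ) : p (i + Fin.ofNat N n) := by
    induction n with
    | zero => simpa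
    | succ n ih =>
      have hsucc : Fin.ofNat N (n + 1) = Fin.ofNat N n + 1 := by
        simp [Fin.ext_iff, Fin.val_add]
      rw [hsucc, ← add_assoc]
      exact h _ ih
  simpa using hp (j - i).val

section CyclicRecurrence

variable {R : Type*} [CommRing R] {N : ℕ} [NeZero N]

/-- The solutions on the cycle `Fin N` of the three-term recurrence with coefficients `c`, `c'` and
`q`. The coefficients are placed so that `c' i = conj (c i)` and `q = μ - d` give the eigenvector
equation of a periodic Jacobi matrix with hopping `c` and potential `d`. -/
def recurrenceSolutions (c c' q : Fin N → R) : Submodule R (Fin N → R) where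
  carrier := {u | ∀ i, c i * u i + c' (i + 1) * u (i + 1 + 1) = q (i + 1) * u (i + 1)}
  add_mem' hu hv i := by
    simp only [Pi.add_apply]
    linear_combination hu i + hv i
  zero_mem' i := by simp
  smul_mem' α u hu i := by
    simp only [Pi.smul_apply, smul_eq_mul]
    linear_combination α * hu i

/-- The Casoratian (discrete Wronskian) of two functions on the cycle `Fin N`. -/
def casoratian (u v : Fin N → R) (i : Fin N) : R :=
  u (i + 1) * v i - u i * v (i + 1)

theorem mul_casoratian_add_one {c c' q u v : Fin N → R}
    (hu : u ∈ recurrenceSolutions c c' q) (hv : v ∈ recurrenceSolutions c c' q) (i : Fin N) :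
    c' (i + 1) * casoratian u v (i + 1) = c i * casoratian u v i := by
  unfold casoratian
  linear_combination v (i + 1) * hu i - u (i + 1) * hv i

variable [IsDomain R] {c c' q : Fin N → R}

theorem eq_zero_of_mem_recurrenceSolutions {u : Fin N → R} (hc' : ∀ i, c' i ≠ 0)
    (hu : u ∈ recurrenceSolutions c c' q) {i : Fin N} (h₀ : u i = 0) (h₁ : u (i + 1) = 0) :
    u = 0 := by
  have hstep (j : Fin N) (hj : u j = 0 ∧ u (j + 1) = 0) :
      u (j + 1) = 0 ∧ u (j + 1 + 1) = 0 := by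
    refine ⟨hj.2, ?_⟩
    simpa [hj.1, hj.2, hc'] using hu j
  exact funext fun j ↦ (forall_of_forall_imp_add_one ⟨h₀, h₁⟩ hstep j).1

theorem not_linearIndependent_of_casoratian_eq_zero (hc' : ∀ i, c' i ≠ 0)
    {u v : recurrenceSolutions c c' q} {i : Fin N} (hi : casoratian (u : Fin N → R) v i = 0) :
    ¬ LinearIndependent R ![u, v] := by
  have hdet : !![u.1 i, v.1 i; u.1 (i + 1), v.1 (i + 1)].det = 0 := by
    rw [det_fin_two_of]
    unfold casoratian at hi
    linear_combination -hi
  obtain ⟨α, hα, hαi⟩ := exists_mulVec_eq_zero_iff.mpr hdet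
  have hcomb : α 0 • u + α 1 • v = 0 := by
    refine Subtype.ext (eq_zero_of_mem_recurrenceSolutions hc'
      (α 0 • u + α 1 • v).2 (i := i) ?_ ?_)
    · simpa [mulVec, dotProduct, Fin.sum_univ_two, mul_comm] using congrFun hαi 0
    · simpa [mulVec, dotProduct, Fin.sum_univ_two, mul_comm] using congrFun hαi 1
  intro hli
  obtain ⟨h₀, h₁⟩ := LinearIndependent.pair_iff.mp hli _ _ hcomb
  exact hα (funext <| Fin.forall_fin_two.mpr ⟨h₀, h₁⟩)

theorem finrank_recurrenceSolutions_le_one (hc' : ∀ i, c' i ≠ 0)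
    (hc : ∏ i, c i ≠ ∏ i, c' i) : finrank R (recurrenceSolutions c c' q) ≤ 1 := by
  by_contra! hrank
  have := Module.nontrivial_of_finrank_pos (zero_lt_one.trans hrank)
  obtain ⟨u, hu⟩ := exists_ne (0 : recurrenceSolutions c c' q)
  obtain ⟨v, huv⟩ := exists_linearIndependent_pair_of_one_lt_finrank hrank hu
  obtain ⟨i, hi⟩ := exists_eq_zero_of_prod_ne_prod (Equiv.addRight 1)
    (mul_casoratian_add_one u.2 v.2) hc
  exact not_linearIndependent_of_casoratian_eq_zero hc' hi huv

end CyclicRecurrence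

section Shift

variable {N : ℕ} [NeZero N]

theorem shiftX_apply (i j : Fin N) : shiftX N i j = if i = j + 1 then 1 else 0 := by
  simp [shiftX, Fin.ext_iff, Fin.val_add]

theorem shiftX_mulVec_add_one (v : Fin N → ℂ) (i : Fin N) : (shiftX N *ᵥ v) (i + 1) = v i := by
  simp [mulVec, dotProduct, shiftX_apply]

theorem conjTranspose_shiftX_mulVec (v : Fin N → ℂ) (i : Fin N) :
    ((shiftX N)ᴴ *ᵥ v) i = v (i + 1) := by
  simp [mulVec, dotProduct, shiftX_apply]

end Shift

/-- The Hermitian periodic Jacobi matrix (a discrete Schrödinger operator on the cycle `ℤ/N`) with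
potential `d`, where `t j` is the amplitude for hopping from `j` to `j + 1` and its conjugate that
for hopping back. -/
noncomputable def periodicJacobi {N : ℕ} (t : Fin N → ℂ) (d : Fin N → ℝ) :
    Matrix (Fin N) (Fin N) ℂ :=
  shiftX N * diagonal t + (shiftX N * diagonal t)ᴴ + diagonal fun i ↦ (d i : ℂ)

theorem isHermitian_periodicJacobi {N : ℕ} (t : Fin N → ℂ) (d : Fin N → ℝ) :
    (periodicJacobi t d).IsHermitian :=
  (isHermitian_add_transpose_self _).add <|
    isHermitian_diagonal_of_self_adjoint _ <| funext fun i ↦ conj_ofReal (d i)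

theorem eigenspace_periodicJacobi_le_recurrenceSolutions {N : ℕ} [NeZero N] (t : Fin N → ℂ)
    (d : Fin N → ℝ) (μ : ℂ) :
    End.eigenspace (periodicJacobi t d).toLin' μ ≤
      recurrenceSolutions t (conj t) fun i ↦ μ - d i := by
  intro v hv i
  rw [End.mem_eigenspace_iff, toLin'_apply] at hv
  have hvi := congrFun hv (i + 1)
  simp only [periodicJacobi, add_mulVec, conjTranspose_mul, diagonal_conjTranspose,
    ← mulVec_mulVec, Pi.add_apply, Pi.smul_apply, smul_eq_mul, shiftX_mulVec_add_one,
    mulVec_diagonal, conjTranspose_shiftX_mulVec] at hvi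
  change t i * v i + star t (i + 1) * v (i + 1 + 1) = _
  linear_combination hvi

theorem finrank_eigenspace_periodicJacobi_le_one {N : ℕ} {t : Fin N → ℂ}
    (ht : (∏ i, t i).im ≠ 0) (d : Fin N → ℝ) (μ : ℂ) :
    finrank ℂ (End.eigenspace (periodicJacobi t d).toLin' μ) ≤ 1 := by
  have : NeZero N := ⟨by rintro rfl; simp at ht⟩
  have ht_ne (i : Fin N) : conj t i ≠ 0 := by
    refine star_ne_zero.mpr fun hi ↦ ht ?_
    rw [Finset.prod_eq_zero (Finset.mem_univ i) hi, zero_im]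
  have hprod : ∏ i, t i ≠ ∏ i, conj t i := fun h ↦
    ht <| conj_eq_iff_im.mp <| (map_prod (starRingEnd ℂ) t _).trans h.symm
  exact (Submodule.finrank_mono (eigenspace_periodicJacobi_le_recurrenceSolutions t d μ)).trans
    (finrank_recurrenceSolutions_le_one ht_ne hprod)

theorem harper_eq_periodicJacobi (N : ℕ) (a b ε : ℝ) :
    harper N a b ε =
      periodicJacobi (fun _ ↦ (a / 2 : ℝ) * exp (b * I)) fun j ↦ ε * (omegaN N ^ (j : ℕ)).re := by
  have hX : (shiftX N * diagonal fun _ ↦ (a / 2 : ℝ) * exp (b * I)) =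
      ((a : ℂ) / 2 * exp (b * I)) • shiftX N := by
    ext; simp [mul_comm]
  have hZ : ((ε : ℂ) / 2) • (clockZ N + (clockZ N)ᴴ) =
      diagonal fun j : Fin N ↦ ((ε * (omegaN N ^ (j : ℕ)).re : ℝ) : ℂ) := by
    rw [clockZ, diagonal_conjTranspose, diagonal_add, ← diagonal_smul]
    congr 1
    ext j : 1
    have hre := add_conj (omegaN N ^ (j : ℕ))
    simp only [Pi.smul_apply, Pi.star_apply, smul_eq_mul, star_def, hre]
    push_cast
    ring
  rw [harper, periodicJacobi, hX, hZ, conjTranspose_smul]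
  simp [← exp_conj]

theorem im_ofReal_mul_exp_pow (r θ : ℝ) (n : ℕ) :
    ((r * exp (θ * I)) ^ n).im = r ^ n * Real.sin (n * θ) := by
  rw [mul_pow, ← exp_nat_mul, ← mul_assoc, ← ofReal_pow, im_ofReal_mul]
  exact_mod_cast congrArg (r ^ n * ·) (exp_ofReal_mul_I_im (n * θ))

theorem im_ofReal_mul_exp_pow_ne_zero {r θ : ℝ} {n : ℕ} (hr : r ≠ 0) (hn : n ≠ 0)
    (hθ : ¬ ∃ m : ℤ, θ = m * Real.pi / n) : ((r * exp (θ * I)) ^ n).im ≠ 0 := by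
  rw [im_ofReal_mul_exp_pow]
  refine mul_ne_zero (pow_ne_zero n hr) fun hsin ↦ hθ ?_
  obtain ⟨m, hm⟩ := Real.sin_eq_zero_iff.mp hsin
  exact ⟨m, by rw [hm, mul_div_cancel_left₀ _ (Nat.cast_ne_zero.mpr hn)]⟩

theorem harper_distinct_eigenvalues_general {N : ℕ} {t : Fin N → ℂ} (ht : (∏ i, t i).im ≠ 0)
    (d : Fin N → ℝ) : (periodicJacobi t d).charpoly.roots.toFinset.card = N := by
  simpa using card_toFinset_roots_charpoly_of_finrank_eigenspace_le_one
    (isHermitian_periodicJacobi t d) (finrank_eigenspace_periodicJacobi_le_one ht d)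

/-- If `a ≠ 0`, `ε ≠ 0`, and `b` is not an integer multiple of `π/N`, then the Harper
matrix `h(a, b, ε)` has `N` distinct eigenvalues: its characteristic polynomial has
`N` distinct roots. -/
theorem harper_distinct_eigenvalues (N : ℕ) (hN : 2 ≤ N) (a b ε : ℝ)
    (ha : a ≠ 0) (hε : ε ≠ 0) (hb : ¬ ∃ m : ℤ, b = (m : ℝ) * Real.pi / N) :
    (Matrix.charpoly (harper N a b ε)).roots.toFinset.card = N := by
  have hflux := im_ofReal_mul_exp_pow_ne_zero (div_ne_zero ha two_ne_zero) (by lia) hb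
  rw [harper_eq_periodicJacobi]
  exact harper_distinct_eigenvalues_general (by rwa [Fin.prod_const]) _
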